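/- arXiv:2503.21224 — 5 statements merged into one kernel-verified Lean document; each statement's English description precedes it below -/
import Mathlib

section
/- Let α ≤ β be real constants and let Q₁, Q₂ : 𝒮 × 𝒜 → ℝ be bounded measurable functions with α ≤ Q₁(s,a) ≤ β and α ≤ Q₂(s,a) ≤ β for all (s,a). Then for every s ∈ 𝒮, |TQ₁(s) − TQ₂(s)| ≤ exp((β − α)/τ) · ∫_𝒜 |Q₁(s,a) − Q₂(s,a)| μ(da). -/
open MeasureTheory

theorem soft_aux {A : Type*} [MeasurableSpace A]
    (μ : Measure A) [IsProbabilityMeasure μ]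
    (τ α β : ℝ) (hτ : 0 < τ) (f g : A → ℝ) (hf : Measurable f) (hg : Measurable g)
    (hfl : ∀ p, α ≤ f p) (hfu : ∀ p, f p ≤ β)
    (hgl : ∀ p, α ≤ g p) (hgu : ∀ p, g p ≤ β) :
    τ * (Real.log (∫ a, Real.exp (-f a / τ) ∂μ) - Real.log (∫ a, Real.exp (-g a / τ) ∂μ)) ≤
      Real.exp ((β - α) / τ) * ∫ a, |f a - g a| ∂μ := by
  have key : ∀ h : A → ℝ, Measurable h → (∀ p, α ≤ h p) → (∀ p, h p ≤ β) →
      Integrable (fun a => Real.exp (-h a / τ)) μ ∧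
        Real.exp (-β / τ) ≤ ∫ a, Real.exp (-h a / τ) ∂μ := by
    intro h hm hl hu
    have hi : Integrable (fun a => Real.exp (-h a / τ)) μ := by
      refine Integrable.of_bound (C := Real.exp (-α / τ))
        (by fun_prop) (Filter.Eventually.of_forall fun a => ?_)
      rw [Real.norm_eq_abs, abs_of_pos (Real.exp_pos _)]
      have := hl a
      gcongr
    refine ⟨hi, ?_⟩
    have h2 : ∫ _a, Real.exp (-β / τ) ∂μ ≤ ∫ a, Real.exp (-h a / τ) ∂μ := by
      refine integral_mono (integrable_const _) hi fun a => ?_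
      have := hu a
      dsimp only
      gcongr
    simpa using h2
  obtain ⟨fi, fI⟩ := key f hf hfl hfu
  obtain ⟨gi, gI⟩ := key g hg hgl hgu
  have di : Integrable (fun a => |f a - g a|) μ := by
    refine Integrable.of_bound (C := β - α)
      (by fun_prop) (Filter.Eventually.of_forall fun a => ?_)
    rw [Real.norm_eq_abs, abs_abs, abs_le]
    constructor <;> linarith [hfl a, hfu a, hgl a, hgu a]
  have hle : ∫ a, Real.exp (-f a / τ) ∂μ ≤ ∫ a, Real.exp (-g a / τ) ∂μ +
      Real.exp (-α / τ) / τ * ∫ a, |f a - g a| ∂μ := by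
    rw [← integral_const_mul, ← integral_add gi (di.const_mul _)]
    refine integral_mono fi (gi.add (di.const_mul _)) fun a => ?_
    dsimp only
    have e1 : Real.exp (-g a / τ) = Real.exp (-f a / τ) * Real.exp ((f a - g a) / τ) := by
      rw [← Real.exp_add]; congr 1; ring
    have e2 := Real.add_one_le_exp ((f a - g a) / τ)
    have e3 : Real.exp (-f a / τ) ≤ Real.exp (-α / τ) := by
      have := hfl a
      gcongr
    have e4 : -(|f a - g a| / τ) ≤ (f a - g a) / τ := by
      rw [← neg_div]
      have := neg_abs_le (f a - g a)
      gcongr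
    have e5 : Real.exp (-f a / τ) * (1 - |f a - g a| / τ) ≤ Real.exp (-g a / τ) := by
      rw [e1]
      exact mul_le_mul_of_nonneg_left (by linarith) (Real.exp_pos _).le
    have e6 : Real.exp (-f a / τ) * (|f a - g a| / τ) ≤
        Real.exp (-α / τ) * (|f a - g a| / τ) :=
      mul_le_mul_of_nonneg_right e3 (by positivity)
    have e7 : Real.exp (-α / τ) / τ * |f a - g a| = Real.exp (-α / τ) * (|f a - g a| / τ) := by
      ring
    rw [e7]; linarith
  have hD : 0 ≤ ∫ a, |f a - g a| ∂μ := integral_nonneg fun a => abs_nonneg _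
  generalize (∫ a, Real.exp (-f a / τ) ∂μ) = F at *
  generalize (∫ a, Real.exp (-g a / τ) ∂μ) = G at *
  generalize (∫ a, |f a - g a| ∂μ) = D at *
  have hF : 0 < F := (Real.exp_pos _).trans_le fI
  have hG : 0 < G := (Real.exp_pos _).trans_le gI
  rw [← Real.log_div hF.ne' hG.ne']
  have l1 := Real.log_le_sub_one_of_pos (div_pos hF hG)
  have k1 : Real.exp (-α / τ) = Real.exp ((β - α) / τ) * Real.exp (-β / τ) := by
    rw [← Real.exp_add]; congr 1; ring
  have k2 : Real.exp (-α / τ) ≤ Real.exp ((β - α) / τ) * G := by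
    rw [k1]; gcongr
  have k3 : F / G ≤ 1 + Real.exp ((β - α) / τ) * D / τ := by
    rw [div_le_iff₀ hG]
    have := mul_le_mul_of_nonneg_right k2 (div_nonneg hD hτ.le)
    calc F ≤ G + Real.exp (-α / τ) / τ * D := hle
      _ = G + Real.exp (-α / τ) * (D / τ) := by ring
      _ ≤ G + Real.exp ((β - α) / τ) * G * (D / τ) := by linarith
      _ = _ := by ring
  calc τ * Real.log (F / G) ≤ τ * (Real.exp ((β - α) / τ) * D / τ) :=
        mul_le_mul_of_nonneg_left (by linarith) hτ.le
    _ = _ := by field_simp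

/-- **Lipschitz property of the soft-Bellman operator with respect to the reference
measure.** For bounded measurable `Q₁, Q₂` with values in `[α, β]`,
`|TQ₁(s) - TQ₂(s)| ≤ exp((β-α)/τ) ∫ |Q₁(s,a) - Q₂(s,a)| dμ(a)`, where
`TQ(s) = -τ log ∫ exp(-Q(s,a)/τ) dμ(a)`. -/
theorem stmt_1 {S A : Type*} [MeasurableSpace S] [MeasurableSpace A]
    (μ : Measure A) [IsProbabilityMeasure μ]
    (τ α β : ℝ) (hτ : 0 < τ) (hαβ : α ≤ β)
    (Q₁ Q₂ : S × A → ℝ) (hQ₁ : Measurable Q₁) (hQ₂ : Measurable Q₂)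
    (hQ₁l : ∀ p, α ≤ Q₁ p) (hQ₁u : ∀ p, Q₁ p ≤ β)
    (hQ₂l : ∀ p, α ≤ Q₂ p) (hQ₂u : ∀ p, Q₂ p ≤ β)
    (s : S) :
    |(-τ * Real.log (∫ a, Real.exp (-Q₁ (s, a) / τ) ∂μ)) -
      (-τ * Real.log (∫ a, Real.exp (-Q₂ (s, a) / τ) ∂μ))| ≤
      Real.exp ((β - α) / τ) * ∫ a, |Q₁ (s, a) - Q₂ (s, a)| ∂μ := by
  have h1 := soft_aux μ τ α β hτ (fun a => Q₁ (s, a)) (fun a => Q₂ (s, a))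
    (by fun_prop) (by fun_prop) (fun _ => hQ₁l _) (fun _ => hQ₁u _)
    (fun _ => hQ₂l _) (fun _ => hQ₂u _)
  have h2 := soft_aux μ τ α β hτ (fun a => Q₂ (s, a)) (fun a => Q₁ (s, a))
    (by fun_prop) (by fun_prop) (fun _ => hQ₂l _) (fun _ => hQ₂u _)
    (fun _ => hQ₁l _) (fun _ => hQ₁u _)
  have h3 : ∫ a, |Q₂ (s, a) - Q₁ (s, a)| ∂μ = ∫ a, |Q₁ (s, a) - Q₂ (s, a)| ∂μ := by
    congr 1; ext a; exact abs_sub_comm _ _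
  rw [h3] at h2
  rw [abs_le]
  constructor <;> linarith
end

section
/- Let τ > 0, let α ≤ β be real constants, let K be a positive integer, and let q₁,…,q_K and r₁,…,r_K be real numbers all lying in [α, β]. Then |−τ · log((1/K) Σ_{k=1}^{K} exp(−q_k/τ)) + τ · log((1/K) Σ_{k=1}^{K} exp(−r_k/τ))| ≤ exp((β − α)/τ) · (1/K) Σ_{k=1}^{K} |q_k − r_k|. -/
theorem one_side (τ α β : ℝ) (hτ : 0 < τ)
    (K : ℕ) (hK : 0 < K) (q r : ℕ → ℝ)
    (hq : ∀ k ∈ Finset.Icc 1 K, q k ∈ Set.Icc α β)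
    (hr : ∀ k ∈ Finset.Icc 1 K, r k ∈ Set.Icc α β) :
    τ * Real.log ((1 / (K : ℝ)) * ∑ k ∈ Finset.Icc 1 K, Real.exp (-r k / τ)) -
    τ * Real.log ((1 / (K : ℝ)) * ∑ k ∈ Finset.Icc 1 K, Real.exp (-q k / τ)) ≤
      Real.exp ((β - α) / τ) * ((1 / (K : ℝ)) * ∑ k ∈ Finset.Icc 1 K, |q k - r k|) := by
  have hK' : (0 : ℝ) < K := by exact_mod_cast hK
  have hne : (Finset.Icc 1 K).Nonempty := ⟨1, by simp; omega⟩
  have low : ∀ f : ℕ → ℝ, (∀ k ∈ Finset.Icc 1 K, f k ∈ Set.Icc α β) →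
      Real.exp (-β / τ) ≤ (1 / (K : ℝ)) * ∑ k ∈ Finset.Icc 1 K, Real.exp (-f k / τ) := by
    intro f hf
    have h : ∑ k ∈ Finset.Icc 1 K, Real.exp (-β / τ) ≤
        ∑ k ∈ Finset.Icc 1 K, Real.exp (-f k / τ) := by
      apply Finset.sum_le_sum
      intro k hk
      have := (hf k hk).2
      gcongr
    rw [Finset.sum_const, Nat.card_Icc, nsmul_eq_mul, Nat.add_sub_cancel] at h
    rw [one_div, ← div_eq_inv_mul, le_div_iff₀ hK']
    linarith
  have hdiff : (1 / (K : ℝ)) * ∑ k ∈ Finset.Icc 1 K, Real.exp (-r k / τ) -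
      (1 / (K : ℝ)) * ∑ k ∈ Finset.Icc 1 K, Real.exp (-q k / τ) ≤
      Real.exp (-α / τ) / τ * ((1 / (K : ℝ)) * ∑ k ∈ Finset.Icc 1 K, |q k - r k|) := by
    rw [← mul_sub, ← Finset.sum_sub_distrib, mul_left_comm, Finset.mul_sum (a := Real.exp (-α / τ) / τ)]
    refine mul_le_mul_of_nonneg_left (Finset.sum_le_sum fun k hk => ?_) (by positivity)
    have h1 : Real.exp (-q k / τ) = Real.exp (-r k / τ) * Real.exp ((r k - q k) / τ) := by
      rw [← Real.exp_add]; congr 1; ring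
    have h2 := Real.add_one_le_exp ((r k - q k) / τ)
    have h3 := Real.exp_pos (-r k / τ)
    have h4 : Real.exp (-r k / τ) ≤ Real.exp (-α / τ) := by
      have := (hr k hk).1
      gcongr
    calc _ ≤ Real.exp (-r k / τ) * ((q k - r k) / τ) := by
          rw [h1]
          have e : (q k - r k) / τ = -((r k - q k) / τ) := by ring
          rw [e]
          nlinarith
      _ ≤ Real.exp (-r k / τ) * (|q k - r k| / τ) := by
          gcongr
          exact le_abs_self _
      _ ≤ Real.exp (-α / τ) * (|q k - r k| / τ) := by gcongr
      _ = _ := by ring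
  have hA := low q hq
  have hB := low r hr
  have hM : 0 ≤ (1 / (K : ℝ)) * ∑ k ∈ Finset.Icc 1 K, |q k - r k| := by positivity
  generalize (1 / (K : ℝ)) * ∑ k ∈ Finset.Icc 1 K, Real.exp (-r k / τ) = B at *
  generalize (1 / (K : ℝ)) * ∑ k ∈ Finset.Icc 1 K, Real.exp (-q k / τ) = A at *
  generalize (1 / (K : ℝ)) * ∑ k ∈ Finset.Icc 1 K, |q k - r k| = M at *
  have hb := Real.exp_pos (-β / τ)
  have hA0 : 0 < A := by linarith
  have hB0 : 0 < B := by linarith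
  have hl := Real.log_le_sub_one_of_pos (div_pos hB0 hA0)
  rw [Real.log_div hB0.ne' hA0.ne'] at hl
  have he : Real.exp ((β - α) / τ) * Real.exp (-β / τ) = Real.exp (-α / τ) := by
    rw [← Real.exp_add]; congr 1; ring
  have h5 : τ * (B - A) ≤ Real.exp (-α / τ) * M := by
    calc _ ≤ τ * (Real.exp (-α / τ) / τ * M) := by gcongr
      _ = _ := by field_simp
  calc _ = τ * (Real.log B - Real.log A) := by ring
    _ ≤ τ * (B / A - 1) := by gcongr
    _ = τ * (B - A) / A := by field_simp
    _ ≤ _ := by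
      rw [div_le_iff₀ hA0]
      refine h5.trans ?_
      rw [← he]
      calc _ = Real.exp ((β - α) / τ) * M * Real.exp (-β / τ) := by ring
        _ ≤ _ := by gcongr

/-- **Finite-sample Lipschitz property of the plain Monte Carlo soft-minimum.**
For `q₁,…,q_K, r₁,…,r_K ∈ [α, β]`,
`|-τ log((1/K) Σ exp(-q_k/τ)) + τ log((1/K) Σ exp(-r_k/τ))|
  ≤ exp((β-α)/τ) · (1/K) Σ |q_k - r_k|`. -/
theorem stmt_2 (τ α β : ℝ) (hτ : 0 < τ) (hαβ : α ≤ β)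
    (K : ℕ) (hK : 0 < K) (q r : ℕ → ℝ)
    (hq : ∀ k ∈ Finset.Icc 1 K, q k ∈ Set.Icc α β)
    (hr : ∀ k ∈ Finset.Icc 1 K, r k ∈ Set.Icc α β) :
    |(-τ * Real.log ((1 / (K : ℝ)) * ∑ k ∈ Finset.Icc 1 K, Real.exp (-q k / τ))) +
      τ * Real.log ((1 / (K : ℝ)) * ∑ k ∈ Finset.Icc 1 K, Real.exp (-r k / τ))| ≤
      Real.exp ((β - α) / τ) * ((1 / (K : ℝ)) * ∑ k ∈ Finset.Icc 1 K, |q k - r k|) := by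
  have h1 := one_side τ α β hτ K hK q r hq hr
  have h2 := one_side τ α β hτ K hK r q hr hq
  simp only [abs_sub_comm (r _) (q _)] at h2
  rw [abs_le]
  constructor <;> linarith
end

section
/- Let (Ω, 𝔽, P) be a probability space, τ > 0, α ≤ β real constants, and K a positive integer. Let S : Ω → 𝒮 and A₁,…,A_K : Ω → 𝒜 be random variables, and let Q₁, Q₂ : 𝒮 × 𝒜 × Ω → ℝ be jointly measurable functions whose values lie almost surely in [α, β]. Assume that for every k ∈ {1,…,K}, the random variable Q₁(S, A_k) − Q₂(S, A_k) has the same distribution as Q₁(S, A₁) − Q₂(S, A₁). Define T̂_K Q_i(S) = −τ · log((1/K) Σ_{k=1}^{K} exp(−Q_i(S, A_k)/τ)) for i = 1, 2. Then ‖T̂_K Q₁(S) − T̂_K Q₂(S)‖_{L²} ≤ exp((β − α)/τ) · ‖Q₁(S, A₁) − Q₂(S, A₁)‖_{L²}. -/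
open MeasureTheory ProbabilityTheory

lemma exp_aux (τ α x y : ℝ) (hτ : 0 < τ) (hx : α ≤ x) :
    Real.exp (-x / τ) - Real.exp (-y / τ) ≤ Real.exp (-α / τ) * (|x - y| / τ) := by
  have h1 : Real.exp (-y / τ) = Real.exp (-x / τ) * Real.exp ((x - y) / τ) := by
    rw [← Real.exp_add]; congr 1; ring
  have h2 := Real.add_one_le_exp ((x - y) / τ)
  have h3 : Real.exp (-x / τ) ≤ Real.exp (-α / τ) := by
    apply Real.exp_le_exp.2; gcongr
  have h4 : -((x - y) / τ) ≤ |x - y| / τ := by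
    rw [← neg_div]; gcongr; exact neg_le_abs _
  have h5 : 0 ≤ |x - y| / τ := by positivity
  have h0 := Real.exp_pos (-x / τ)
  rw [h1]
  calc _ = Real.exp (-x / τ) * (1 - Real.exp ((x - y) / τ)) := by ring
    _ ≤ Real.exp (-x / τ) * (|x - y| / τ) := by
      apply mul_le_mul_of_nonneg_left _ h0.le; linarith
    _ ≤ _ := by gcongr

lemma one_sided (τ α β : ℝ) (hτ : 0 < τ) (K : ℕ) (hK : 0 < K) (x y : ℕ → ℝ)
    (hx : ∀ k, α ≤ x k) (hy : ∀ k, y k ≤ β) :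
    τ * Real.log ((1 / (K : ℝ)) * ∑ k ∈ Finset.Icc 1 K, Real.exp (-x k / τ)) -
      τ * Real.log ((1 / (K : ℝ)) * ∑ k ∈ Finset.Icc 1 K, Real.exp (-y k / τ)) ≤
    Real.exp ((β - α) / τ) * ((1 / (K : ℝ)) * ∑ k ∈ Finset.Icc 1 K, |x k - y k|) := by
  have hK' : (0 : ℝ) < K := by exact_mod_cast hK
  have hne : (Finset.Icc 1 K).Nonempty := ⟨1, by simp; omega⟩
  set X := ∑ k ∈ Finset.Icc 1 K, Real.exp (-x k / τ) with hX
  set Y := ∑ k ∈ Finset.Icc 1 K, Real.exp (-y k / τ) with hY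
  set D := ∑ k ∈ Finset.Icc 1 K, |x k - y k| with hD
  have hXp : 0 < X := Finset.sum_pos (fun _ _ => Real.exp_pos _) hne
  have hYp : 0 < Y := Finset.sum_pos (fun _ _ => Real.exp_pos _) hne
  have hDp : 0 ≤ D := Finset.sum_nonneg (fun _ _ => abs_nonneg _)
  have hYl : K * Real.exp (-β / τ) ≤ Y := by
    have : ∑ k ∈ Finset.Icc 1 K, Real.exp (-β / τ) ≤ Y := by
      apply Finset.sum_le_sum
      intro k _
      apply Real.exp_le_exp.2
      have := hy k
      gcongr
    simpa using this
  have hXY : X - Y ≤ Real.exp (-α / τ) * (D / τ) := by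
    rw [hX, hY, hD, ← Finset.sum_sub_distrib, Finset.sum_div, Finset.mul_sum]
    exact Finset.sum_le_sum fun k _ => exp_aux τ α _ _ hτ (hx k)
  have hl : Real.log (1 / (K : ℝ) * X) - Real.log (1 / (K : ℝ) * Y) ≤ (X - Y) / Y := by
    rw [← Real.log_div (by positivity) (by positivity)]
    have h := Real.log_le_sub_one_of_pos (x := 1 / (K : ℝ) * X / (1 / (K : ℝ) * Y)) (by positivity)
    refine h.trans (le_of_eq ?_)
    field_simp
  have hE : Real.exp ((β - α) / τ) = Real.exp (-α / τ) / Real.exp (-β / τ) := by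
    rw [← Real.exp_sub]; congr 1; ring
  rw [← mul_sub]
  calc _ ≤ τ * ((X - Y) / Y) := by gcongr
    _ ≤ τ * ((Real.exp (-α / τ) * (D / τ)) / Y) := by gcongr
    _ ≤ τ * ((Real.exp (-α / τ) * (D / τ)) / (K * Real.exp (-β / τ))) := by gcongr
    _ = _ := by rw [hE]; field_simp

lemma pointwise (τ α β : ℝ) (hτ : 0 < τ) (K : ℕ) (hK : 0 < K) (x y : ℕ → ℝ)
    (hx : ∀ k, x k ∈ Set.Icc α β) (hy : ∀ k, y k ∈ Set.Icc α β) :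
    ((-τ * Real.log ((1 / (K : ℝ)) * ∑ k ∈ Finset.Icc 1 K, Real.exp (-x k / τ))) -
      (-τ * Real.log ((1 / (K : ℝ)) * ∑ k ∈ Finset.Icc 1 K, Real.exp (-y k / τ)))) ^ 2 ≤
    Real.exp ((β - α) / τ) ^ 2 *
      ((1 / (K : ℝ)) * ∑ k ∈ Finset.Icc 1 K, (x k - y k) ^ 2) := by
  have hK' : (0 : ℝ) < K := by exact_mod_cast hK
  have h1 := one_sided τ α β hτ K hK x y (fun k => (hx k).1) (fun k => (hy k).2)
  have h2 := one_sided τ α β hτ K hK y x (fun k => (hy k).1) (fun k => (hx k).2)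
  simp only [abs_sub_comm (y _) (x _)] at h2
  have h3 : ((-τ * Real.log ((1 / (K : ℝ)) * ∑ k ∈ Finset.Icc 1 K, Real.exp (-x k / τ))) -
      (-τ * Real.log ((1 / (K : ℝ)) * ∑ k ∈ Finset.Icc 1 K, Real.exp (-y k / τ)))) ^ 2 ≤
      (Real.exp ((β - α) / τ) * ((1 / (K : ℝ)) * ∑ k ∈ Finset.Icc 1 K, |x k - y k|)) ^ 2 := by
    apply sq_le_sq'
    · linarith
    · linarith
  refine h3.trans ?_
  rw [mul_pow]
  apply mul_le_mul_of_nonneg_left _ (sq_nonneg _)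
  have h4 := sq_sum_le_card_mul_sum_sq (s := Finset.Icc 1 K) (f := fun k => |x k - y k|)
  simp only [sq_abs, Nat.card_Icc, Nat.add_sub_cancel] at h4
  rw [mul_pow]
  calc _ ≤ (1 / (K : ℝ)) ^ 2 * (K * ∑ k ∈ Finset.Icc 1 K, (x k - y k) ^ 2) := by gcongr
    _ = _ := by field_simp

/-- **`L²`-Lipschitz property of the plain Monte Carlo approximation of the
soft-Bellman operator.** For jointly measurable random functions `Q₁, Q₂` with values
a.s. in `[α, β]`, such that `Q₁(S,A_k) - Q₂(S,A_k)` has the same distribution as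
`Q₁(S,A₁) - Q₂(S,A₁)` for each `k`,
`‖T̂_K Q₁(S) - T̂_K Q₂(S)‖_{L²} ≤ exp((β-α)/τ) ‖Q₁(S,A₁) - Q₂(S,A₁)‖_{L²}`, where
`T̂_K Q(S) = -τ log((1/K) Σ_{k=1}^K exp(-Q(S,A_k)/τ))` and
`‖X‖_{L²} = (E[X²])^{1/2}`. -/
theorem stmt_3 {Ω S A : Type*} [MeasurableSpace Ω] [MeasurableSpace S] [MeasurableSpace A]
    (P : Measure Ω) [IsProbabilityMeasure P]
    (τ α β : ℝ) (hτ : 0 < τ) (hαβ : α ≤ β)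
    (K : ℕ) (hK : 0 < K)
    (Sv : Ω → S) (Av : ℕ → Ω → A)
    (hSv : Measurable Sv) (hAv : ∀ k, Measurable (Av k))
    (Q₁ Q₂ : S × A × Ω → ℝ) (hQ₁ : Measurable Q₁) (hQ₂ : Measurable Q₂)
    (hbound : ∀ᵐ ω ∂P, ∀ s a, Q₁ (s, a, ω) ∈ Set.Icc α β ∧ Q₂ (s, a, ω) ∈ Set.Icc α β)
    (hident : ∀ k ∈ Finset.Icc 1 K,
      IdentDistrib
        (fun ω => Q₁ (Sv ω, Av k ω, ω) - Q₂ (Sv ω, Av k ω, ω))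
        (fun ω => Q₁ (Sv ω, Av 1 ω, ω) - Q₂ (Sv ω, Av 1 ω, ω)) P P) :
    Real.sqrt (∫ ω,
        ((-τ * Real.log ((1 / (K : ℝ)) *
            ∑ k ∈ Finset.Icc 1 K, Real.exp (-Q₁ (Sv ω, Av k ω, ω) / τ))) -
          (-τ * Real.log ((1 / (K : ℝ)) *
            ∑ k ∈ Finset.Icc 1 K, Real.exp (-Q₂ (Sv ω, Av k ω, ω) / τ)))) ^ 2 ∂P) ≤
      Real.exp ((β - α) / τ) *
        Real.sqrt (∫ ω, (Q₁ (Sv ω, Av 1 ω, ω) - Q₂ (Sv ω, Av 1 ω, ω)) ^ 2 ∂P) := by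
  have hK' : (0 : ℝ) < K := by exact_mod_cast hK
  have hid : ∀ k ∈ Finset.Icc 1 K, IdentDistrib
        (fun ω => (Q₁ (Sv ω, Av k ω, ω) - Q₂ (Sv ω, Av k ω, ω)) ^ 2)
        (fun ω => (Q₁ (Sv ω, Av 1 ω, ω) - Q₂ (Sv ω, Av 1 ω, ω)) ^ 2) P P := fun k hk =>
    (hident k hk).comp (u := fun t : ℝ => t ^ 2) (by fun_prop)
  have hint : ∀ k, Integrable
      (fun ω => (Q₁ (Sv ω, Av k ω, ω) - Q₂ (Sv ω, Av k ω, ω)) ^ 2) P := by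
    intro k
    have hA := hAv k
    refine Integrable.of_bound (C := (β - α) ^ 2) (by
      apply Measurable.aestronglyMeasurable; fun_prop) ?_
    filter_upwards [hbound] with ω h
    obtain ⟨⟨a, b⟩, c, d⟩ := h (Sv ω) (Av k ω)
    rw [Real.norm_of_nonneg (sq_nonneg _)]
    apply sq_le_sq' <;> linarith
  have hE := Real.exp_pos ((β - α) / τ)
  rw [← Real.sqrt_sq hE.le, ← Real.sqrt_mul (sq_nonneg _)]
  apply Real.sqrt_le_sqrt
  have hfin : ∫ ω, Real.exp ((β - α) / τ) ^ 2 * ((1 / (K : ℝ)) * ∑ k ∈ Finset.Icc 1 K,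
      (Q₁ (Sv ω, Av k ω, ω) - Q₂ (Sv ω, Av k ω, ω)) ^ 2) ∂P =
      Real.exp ((β - α) / τ) ^ 2 *
        ∫ ω, (Q₁ (Sv ω, Av 1 ω, ω) - Q₂ (Sv ω, Av 1 ω, ω)) ^ 2 ∂P := by
    rw [integral_const_mul, integral_const_mul, integral_finsetSum _ (fun k _ => hint k),
      Finset.sum_congr rfl (fun k hk => (hid k hk).integral_eq)]
    simp
    field_simp
  rw [← hfin]
  apply integral_mono_of_nonneg
  · exact Filter.Eventually.of_forall fun ω => sq_nonneg _
  · exact ((integrable_finsetSum _ fun k _ => hint k).const_mul _).const_mul _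
  · filter_upwards [hbound] with ω h
    exact pointwise τ α β hτ K hK (fun k => Q₁ (Sv ω, Av k ω, ω))
      (fun k => Q₂ (Sv ω, Av k ω, ω)) (fun k => (h _ _).1) (fun k => (h _ _).2)
end

section
/- Let τ > 0 and 0 < A < B. There exists a constant C > 0 depending only on A and B such that for all real numbers a, b, a′, b′, m, m′ ∈ [A, B], setting c = (a + b)/2, c′ = (a′ + b′)/2 and g(x) = −τ log x, one has |g(c) − g(c′) − (1/2)[g(a) − g(a′) + g(b) − g(b′)]| ≤ τ C Σ_{x ∈ {a, b, c}} [ (|x − x′| + |m − m′|)(x − m)² + |(x − m + x′ − m′)(x − x′ − (m − m′))| ], where for x = a, b, c the symbol x′ denotes a′, b′, c′ respectively. -/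
lemma aux_pos {A m x t : ℝ} (hm : A ≤ m) (hx : A ≤ x) (ht : t ∈ Set.Icc (0:ℝ) 1) :
    A ≤ (1 - t) * m + t * x := by
  obtain ⟨h0, h1⟩ := ht
  nlinarith [mul_le_mul_of_nonneg_left hm (sub_nonneg.2 h1), mul_le_mul_of_nonneg_left hx h0]

lemma aux_cont {A m x : ℝ} (hA : 0 < A) (hm : A ≤ m) (hx : A ≤ x) :
    IntervalIntegrable (fun t : ℝ => (1 - t) / ((1 - t) * m + t * x) ^ 2)
      MeasureTheory.volume 0 1 := by
  apply ContinuousOn.intervalIntegrable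
  rw [Set.uIcc_of_le zero_le_one]
  apply ContinuousOn.div (by fun_prop) (by fun_prop)
  intro t ht
  have := aux_pos hm hx ht
  exact pow_ne_zero 2 (by linarith)

/-- Taylor remainder kernel. -/
noncomputable def auxK (m x : ℝ) : ℝ := ∫ t in (0:ℝ)..1, (1 - t) / ((1 - t) * m + t * x) ^ 2

lemma aux_taylor {A m x : ℝ} (hA : 0 < A) (hm : A ≤ m) (hx : A ≤ x) :
    Real.log x = Real.log m + (x - m) / m - (x - m) ^ 2 * auxK m x := by
  have key : ∫ t in (0:ℝ)..1, (x - m) ^ 2 * ((1 - t) / ((1 - t) * m + t * x) ^ 2) =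
      ((1 - (1:ℝ)) * (-(x - m) / ((1 - 1) * m + 1 * x)) - Real.log ((1 - 1) * m + 1 * x)) -
      ((1 - (0:ℝ)) * (-(x - m) / ((1 - 0) * m + 0 * x)) - Real.log ((1 - 0) * m + 0 * x)) := by
    apply intervalIntegral.integral_eq_sub_of_hasDerivAt
      (f := fun t : ℝ => (1 - t) * (-(x - m) / ((1 - t) * m + t * x))
        - Real.log ((1 - t) * m + t * x))
    · intro t ht
      rw [Set.uIcc_of_le zero_le_one] at ht
      have hp := aux_pos hm hx ht
      have hne : (1 - t) * m + t * x ≠ 0 := by linarith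
      have h1 : HasDerivAt (fun t : ℝ => 1 - t) (-1) t := by
        simpa using (hasDerivAt_id t).const_sub 1
      have h2 : HasDerivAt (fun t : ℝ => (1 - t) * m + t * x) (-1 * m + 1 * x) t :=
        (h1.mul_const m).add ((hasDerivAt_id t).mul_const x)
      have h3 := (h1.mul ((hasDerivAt_const t (-(x - m))).div h2 hne)).sub (h2.log hne)
      refine h3.congr_deriv ?_
      simp only [Pi.div_apply]
      field_simp
      ring
    · exact (aux_cont hA hm hx).const_mul _
  rw [intervalIntegral.integral_const_mul] at key
  change (x - m) ^ 2 * auxK m x = _ at key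
  rw [key]
  simp only [sub_self, zero_mul, zero_add, one_mul, sub_zero, add_zero]
  ring

lemma aux_bound {A m x : ℝ} (hA : 0 < A) (hm : A ≤ m) (hx : A ≤ x) :
    |auxK m x| ≤ 1 / A ^ 2 := by
  have h := intervalIntegral.norm_integral_le_of_norm_le_const (a := (0:ℝ)) (b := 1)
    (f := fun t : ℝ => (1 - t) / ((1 - t) * m + t * x) ^ 2) (C := 1 / A ^ 2) ?_
  · simpa [auxK] using h
  · intro t ht
    rw [Set.uIoc_of_le zero_le_one] at ht
    have hp := aux_pos hm hx ⟨ht.1.le, ht.2⟩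
    have h1 : 0 ≤ 1 - t := by linarith [ht.2]
    rw [Real.norm_eq_abs, abs_of_nonneg (by positivity)]
    gcongr
    linarith [ht.1]

lemma aux_lip0 {A p q : ℝ} (hA : 0 < A) (hp : A ≤ p) (hq : A ≤ q) :
    |1 / p ^ 2 - 1 / q ^ 2| ≤ 2 / A ^ 3 * |p - q| := by
  have hp0 : 0 < p := by linarith
  have hq0 : 0 < q := by linarith
  have e : 1 / p ^ 2 - 1 / q ^ 2 = (1 / (p * q ^ 2) + 1 / (p ^ 2 * q)) * (q - p) := by
    field_simp
    ring
  rw [e, abs_mul, abs_sub_comm q p, abs_of_pos (by positivity)]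
  gcongr
  have h1 : 1 / (p * q ^ 2) ≤ 1 / (A * A ^ 2) := by gcongr
  have h2 : 1 / (p ^ 2 * q) ≤ 1 / (A ^ 2 * A) := by gcongr
  have e2 : 2 / A ^ 3 = 1 / (A * A ^ 2) + 1 / (A ^ 2 * A) := by
    field_simp
    ring
  linarith

lemma aux_lip {A m x m' x' : ℝ} (hA : 0 < A) (hm : A ≤ m) (hx : A ≤ x)
    (hm' : A ≤ m') (hx' : A ≤ x') :
    |auxK m x - auxK m' x'| ≤ 2 / A ^ 3 * (|x - x'| + |m - m'|) := by
  unfold auxK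
  rw [← intervalIntegral.integral_sub (aux_cont hA hm hx) (aux_cont hA hm' hx')]
  have h := intervalIntegral.norm_integral_le_of_norm_le_const (a := (0:ℝ)) (b := 1)
    (f := fun t : ℝ => (1 - t) / ((1 - t) * m + t * x) ^ 2
      - (1 - t) / ((1 - t) * m' + t * x') ^ 2)
    (C := 2 / A ^ 3 * (|x - x'| + |m - m'|)) ?_
  · simpa using h
  · intro t ht
    rw [Set.uIoc_of_le zero_le_one] at ht
    have hp := aux_pos hm hx ⟨ht.1.le, ht.2⟩
    have hq := aux_pos hm' hx' ⟨ht.1.le, ht.2⟩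
    have h1 : 0 ≤ 1 - t := by linarith [ht.2]
    have h2 : 1 - t ≤ 1 := by linarith [ht.1]
    have e : (1 - t) / ((1 - t) * m + t * x) ^ 2 - (1 - t) / ((1 - t) * m' + t * x') ^ 2
      = (1 - t) * (1 / ((1 - t) * m + t * x) ^ 2 - 1 / ((1 - t) * m' + t * x') ^ 2) := by ring
    rw [Real.norm_eq_abs, e, abs_mul, abs_of_nonneg h1]
    refine (mul_le_of_le_one_left (abs_nonneg _) h2).trans ((aux_lip0 hA hp hq).trans ?_)
    gcongr
    have e3 : (1 - t) * m + t * x - ((1 - t) * m' + t * x')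
      = t * (x - x') + (1 - t) * (m - m') := by ring
    rw [e3]
    refine (abs_add_le _ _).trans ?_
    rw [abs_mul, abs_mul, abs_of_nonneg h1, abs_of_pos ht.1]
    exact add_le_add (mul_le_of_le_one_left (abs_nonneg _) ht.2)
      (mul_le_of_le_one_left (abs_nonneg _) h2)

lemma aux_rem {A m x m' x' : ℝ} (hA : 0 < A) (hm : A ≤ m) (hx : A ≤ x)
    (hm' : A ≤ m') (hx' : A ≤ x') :
    |(x - m) ^ 2 * auxK m x - (x' - m') ^ 2 * auxK m' x'| ≤
      (2 / A ^ 3 + 1 / A ^ 2) * ((|x - x'| + |m - m'|) * (x - m) ^ 2 +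
        |(x - m + x' - m') * (x - x' - (m - m'))|) := by
  have e : (x - m) ^ 2 * auxK m x - (x' - m') ^ 2 * auxK m' x' =
      (x - m) ^ 2 * (auxK m x - auxK m' x') +
      ((x - m + x' - m') * (x - x' - (m - m'))) * auxK m' x' := by ring
  rw [e]
  refine (abs_add_le _ _).trans ?_
  rw [abs_mul, abs_mul _ (auxK m' x'), abs_of_nonneg (sq_nonneg (x - m))]
  have h1 := mul_le_mul_of_nonneg_left (aux_lip hA hm hx hm' hx') (sq_nonneg (x - m))
  have h2 := mul_le_mul_of_nonneg_left (aux_bound hA hm' hx')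
    (abs_nonneg ((x - m + x' - m') * (x - x' - (m - m'))))
  have h3 : 0 ≤ 1 / A ^ 2 * ((|x - x'| + |m - m'|) * (x - m) ^ 2) := by positivity
  have h4 : 0 ≤ 2 / A ^ 3 * |(x - m + x' - m') * (x - x' - (m - m'))| := by positivity
  linarith

/-- **Second-order Taylor estimate for `g(x) = -τ log x` (antithetic difference
bound).** There is a constant `C > 0` depending only on `A` and `B` such that for all
`τ > 0` and all `a, b, a', b', m, m' ∈ [A, B]`, with `c = (a+b)/2`, `c' = (a'+b')/2`,
`|g(c) - g(c') - (1/2)[g(a) - g(a') + g(b) - g(b')]|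
  ≤ τ C Σ_{x ∈ {a,b,c}} [(|x - x'| + |m - m'|)(x - m)²
      + |(x - m + x' - m')(x - x' - (m - m'))|]`. -/
theorem stmt_9 (A B : ℝ) (hA : 0 < A) (hAB : A < B) :
    ∃ C : ℝ, 0 < C ∧
      ∀ τ : ℝ, 0 < τ →
      ∀ a b a' b' m m' : ℝ,
        a ∈ Set.Icc A B → b ∈ Set.Icc A B → a' ∈ Set.Icc A B → b' ∈ Set.Icc A B →
        m ∈ Set.Icc A B → m' ∈ Set.Icc A B →
        |(-τ * Real.log ((a + b) / 2)) - (-τ * Real.log ((a' + b') / 2)) -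
            (1 / 2) * (((-τ * Real.log a) - (-τ * Real.log a')) +
              ((-τ * Real.log b) - (-τ * Real.log b')))| ≤
          τ * C *
            (((|a - a'| + |m - m'|) * (a - m) ^ 2 +
                |(a - m + a' - m') * (a - a' - (m - m'))|) +
              ((|b - b'| + |m - m'|) * (b - m) ^ 2 +
                |(b - m + b' - m') * (b - b' - (m - m'))|) +
              ((|(a + b) / 2 - (a' + b') / 2| + |m - m'|) * ((a + b) / 2 - m) ^ 2 +
                |((a + b) / 2 - m + (a' + b') / 2 - m') *
                  ((a + b) / 2 - (a' + b') / 2 - (m - m'))|)) := by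
  refine ⟨2 / A ^ 3 + 1 / A ^ 2, by positivity, ?_⟩
  intro τ hτ a b a' b' m m' ha hb ha' hb' hm hm'
  have hc : A ≤ (a + b) / 2 := by linarith [ha.1, hb.1]
  have hc' : A ≤ (a' + b') / 2 := by linarith [ha'.1, hb'.1]
  have ra := aux_rem hA hm.1 ha.1 hm'.1 ha'.1
  have rb := aux_rem hA hm.1 hb.1 hm'.1 hb'.1
  have rc := aux_rem hA hm.1 hc hm'.1 hc'
  rw [aux_taylor hA hm.1 ha.1, aux_taylor hA hm.1 hb.1, aux_taylor hA hm.1 hc,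
    aux_taylor hA hm'.1 ha'.1, aux_taylor hA hm'.1 hb'.1, aux_taylor hA hm'.1 hc']
  have e : ∀ L L' i i' Ra Rb Rc Ra' Rb' Rc' : ℝ,
      (-τ * (L + ((a + b) / 2 - m) * i - Rc)) - (-τ * (L' + ((a' + b') / 2 - m') * i' - Rc')) -
      (1 / 2) * (((-τ * (L + (a - m) * i - Ra)) - (-τ * (L' + (a' - m') * i' - Ra'))) +
        ((-τ * (L + (b - m) * i - Rb)) - (-τ * (L' + (b' - m') * i' - Rb'))))
      = τ * ((Rc - Rc') - (1 / 2) * ((Ra - Ra') + (Rb - Rb'))) := by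
    intros
    ring
  simp only [div_eq_mul_inv _ m, div_eq_mul_inv _ m']
  rw [e, abs_mul, abs_of_pos hτ, mul_assoc]
  apply mul_le_mul_of_nonneg_left _ hτ.le
  rw [mul_add, mul_add]
  have pa := (abs_nonneg _).trans ra
  have pb := (abs_nonneg _).trans rb
  rw [abs_le] at ra rb rc ⊢
  constructor <;> linarith [ra.1, ra.2, rb.1, rb.2, rc.1, rc.2]
end

section
/- Let M, K be integers with M ≥ 2 and K ≥ 1, and let (u_n)_{n∈ℕ} be a sequence of nonnegative real numbers satisfying, for all n ∈ ℕ, u_n ≤ (K + 1)(M^{n+1} − 1)/(M − 1) + K(1 + 1/M) Σ_{l=0}^{n−1} M^{n−l} u_l. Then for all n ∈ ℕ, u_n ≤ (K + 1) · (M/(M − 1)) · (1 + K(1 + 1/M))ⁿ · Mⁿ. -/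
/-- **Sample-complexity recursion for the MLMC estimator.** If `M ≥ 2`, `K ≥ 1` and
the nonnegative sequence `(u_n)` satisfies
`u_n ≤ (K+1)(M^{n+1} - 1)/(M-1) + K(1 + 1/M) Σ_{l=0}^{n-1} M^{n-l} u_l` for all `n`,
then `u_n ≤ (K+1) · (M/(M-1)) · (1 + K(1 + 1/M))ⁿ · Mⁿ` for all `n`. -/
theorem stmt_14 (M K : ℕ) (hM : 2 ≤ M) (hK : 1 ≤ K)
    (u : ℕ → ℝ) (hu : ∀ n, 0 ≤ u n)
    (hrec : ∀ n, u n ≤ ((K : ℝ) + 1) * ((M : ℝ) ^ (n + 1) - 1) / ((M : ℝ) - 1) +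
      (K : ℝ) * (1 + 1 / (M : ℝ)) * ∑ l ∈ Finset.range n, (M : ℝ) ^ (n - l) * u l) :
    ∀ n, u n ≤ ((K : ℝ) + 1) * ((M : ℝ) / ((M : ℝ) - 1)) *
      (1 + (K : ℝ) * (1 + 1 / (M : ℝ))) ^ n * (M : ℝ) ^ n := by
  have hM1 : (0 : ℝ) < (M : ℝ) - 1 := by
    have : (2 : ℝ) ≤ M := by exact_mod_cast hM
    linarith
  have hM0 : (0 : ℝ) < M := by linarith
  have hq : 0 ≤ (K : ℝ) * (1 + 1 / (M : ℝ)) := by positivity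
  generalize (K : ℝ) * (1 + 1 / (M : ℝ)) = q at *
  obtain ⟨C, hC⟩ : ∃ C : ℝ, C = ((K : ℝ) + 1) * ((M : ℝ) / ((M : ℝ) - 1)) := ⟨_, rfl⟩
  rw [← hC]
  intro n
  induction n using Nat.strong_induction_on with
  | _ n ih =>
    have h1 : ((K : ℝ) + 1) * ((M : ℝ) ^ (n + 1) - 1) / ((M : ℝ) - 1) ≤ C * (M : ℝ) ^ n := by
      have h : C * (M : ℝ) ^ n = ((K : ℝ) + 1) * (M : ℝ) ^ (n + 1) / ((M : ℝ) - 1) := by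
        rw [hC]; ring
      rw [h]
      gcongr
      linarith
    have h2 : ∑ l ∈ Finset.range n, (M : ℝ) ^ (n - l) * u l
        ≤ C * (M : ℝ) ^ n * ∑ l ∈ Finset.range n, (1 + q) ^ l := by
      rw [Finset.mul_sum]
      apply Finset.sum_le_sum
      intro l hl
      have hl' := Finset.mem_range.mp hl
      calc (M : ℝ) ^ (n - l) * u l
          ≤ (M : ℝ) ^ (n - l) * (C * (1 + q) ^ l * (M : ℝ) ^ l) := by
            gcongr
            exact ih l hl'
        _ = C * ((M : ℝ) ^ (n - l) * (M : ℝ) ^ l) * (1 + q) ^ l := by ring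
        _ = C * (M : ℝ) ^ n * (1 + q) ^ l := by
            rw [← pow_add, Nat.sub_add_cancel hl'.le]
    have h3 := mul_geom_sum (1 + q) n
    rw [add_sub_cancel_left] at h3
    have h4 := mul_le_mul_of_nonneg_left h2 hq
    have h5 : q * (C * (M : ℝ) ^ n * ∑ l ∈ Finset.range n, (1 + q) ^ l)
        = C * (M : ℝ) ^ n * ((1 + q) ^ n - 1) := by
      rw [← h3]; ring
    have := hrec n
    nlinarith
end
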